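/- arXiv:0811.4713 — 3 statements merged into one kernel-verified Lean document; each statement's English description precedes it below -/
import Mathlib

section
/- Let φ0 be the query on simple graphs given by φ0(x, y): x ≠ y and there exists a vertex z with z ≠ x, z ≠ y, z adjacent to x and z adjacent to y. Suppose that to every finite simple graph G of arboricity at most 2 there is assigned an injective labeling J_G : V(G) → List Bool, and there is a single decoder D : List Bool → List Bool → Bool (not depending on G) such that for every such G and all vertices x, y one has D (J_G x) (J_G y) = true if and only if φ0(x, y) holds in G. Then for every N there exist a finite simple graph G of arboricity at most 2 with ñ ≥ N vertices and a vertex x of G such that the length of J_G x is strictly greater than √(ñ/2) − 1. -/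
/-- A simple graph has arboricity at most 2 if its edge set is the union of the
edge sets of two forests (acyclic graphs) on the same vertex set. -/
def ArboricityAtMostTwo {V : Type*} (G : SimpleGraph V) : Prop :=
  ∃ F₁ F₂ : SimpleGraph V, F₁.IsAcyclic ∧ F₂.IsAcyclic ∧ G = F₁ ⊔ F₂

/-- The query `φ₀(x,y)`: `x ≠ y` and `x` and `y` have a common neighbor. -/
def Phi0 {V : Type*} (G : SimpleGraph V) (x y : V) : Prop :=
  x ≠ y ∧ ∃ z, z ≠ x ∧ z ≠ y ∧ G.Adj x z ∧ G.Adj z y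

/-- The graph joining `u (f p)` to `w p` for every selected `p`. -/
def starGraph {A P V : Type*} (u : A → V) (w : P → V) (S : P → Bool) (f : P → A) :
    SimpleGraph V :=
  SimpleGraph.fromRel (fun x y => ∃ p, S p = true ∧ x = u (f p) ∧ y = w p)

lemma starGraph_adj {A P V : Type*} {u : A → V} {w : P → V} {S : P → Bool} {f : P → A}
    (hw : Function.Injective w) (huw : ∀ a p, u a ≠ w p) (x : V) (p : P) :
    (starGraph u w S f).Adj (w p) x ↔ S p = true ∧ x = u (f p) := by
  unfold starGraph
  rw [SimpleGraph.fromRel_adj]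
  constructor
  · rintro ⟨_, ⟨q, hq, h1, _⟩ | ⟨q, hq, h1, h2⟩⟩
    · exact absurd h1.symm (huw _ _)
    · have := hw h2
      subst this
      exact ⟨hq, h1⟩
  · rintro ⟨h1, rfl⟩
    exact ⟨(huw _ _).symm, Or.inr ⟨p, h1, rfl, rfl⟩⟩

lemma starGraph_acyclic {A P V : Type*} {u : A → V} {w : P → V} {S : P → Bool} {f : P → A}
    (hw : Function.Injective w) (huw : ∀ a p, u a ≠ w p) :
    (starGraph u w S f).IsAcyclic := by
  rw [SimpleGraph.isAcyclic_iff_forall_adj_isBridge]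
  have key : ∀ p, (starGraph u w S f).IsBridge s(w p, u (f p)) := by
    intro p
    rw [SimpleGraph.isBridge_iff]
    rintro ⟨c⟩
    generalize hv : u (f p) = v at c
    cases c with
    | nil => exact huw _ _ hv
    | cons h1 _ =>
      rw [SimpleGraph.deleteEdges_adj, starGraph_adj hw huw] at h1
      obtain ⟨⟨_, h2⟩, h3⟩ := h1
      exact h3 (by rw [h2, hv]; rfl)
  intro x y hxy
  have h := hxy
  unfold starGraph at h
  rw [SimpleGraph.fromRel_adj] at h
  obtain ⟨_, ⟨q, hq, rfl, rfl⟩ | ⟨q, hq, rfl, rfl⟩⟩ := h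
  · rw [Sym2.eq_swap]; exact key q
  · exact key q

lemma card_short (k : ℕ) : ∃ (_ : Fintype {l : List Bool // l.length < k}),
    Fintype.card {l : List Bool // l.length < k} + 1 ≤ 2 ^ k := by
  let F : {l : List Bool // l.length < k} → (Σ i : Fin k, List.Vector Bool i) :=
    fun l => ⟨⟨l.1.length, l.2⟩, ⟨l.1, rfl⟩⟩
  let g : (Σ i : Fin k, List.Vector Bool i) → List Bool := fun s => s.2.1
  have hF : Function.Injective F := by
    intro a b h
    exact Subtype.ext (congrArg g h)
  refine ⟨Fintype.ofInjective F hF, ?_⟩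
  have h2 : Fintype.card (Σ i : Fin k, List.Vector Bool i) + 1 = 2 ^ k := by
    simp only [Fintype.card_sigma, card_vector, Fintype.card_bool]
    rw [Fin.sum_univ_eq_sum_range (fun i => 2 ^ i)]
    clear hF F g
    induction k with
    | zero => simp
    | succ k ih => rw [Finset.sum_range_succ, pow_succ]; omega
  have h := @Fintype.card_le_of_injective _ _ (Fintype.ofInjective F hF) _ F hF
  omega

/-- Proposition 5.1: every labeling scheme supporting the query `φ₀` on graphs
of arboricity at most 2 requires, on some graphs with `ñ` vertices (with `ñ`
arbitrarily large), labels of length greater than `√(ñ/2) - 1`. -/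
theorem phi0_labeling_lower_bound
    (J : ∀ (n : ℕ), SimpleGraph (Fin n) → Fin n → List Bool)
    (hJ : ∀ (n : ℕ) (G : SimpleGraph (Fin n)), ArboricityAtMostTwo G →
      Function.Injective (J n G))
    (D : List Bool → List Bool → Bool)
    (hD : ∀ (n : ℕ) (G : SimpleGraph (Fin n)), ArboricityAtMostTwo G →
      ∀ x y : Fin n, D (J n G x) (J n G y) = true ↔ Phi0 G x y) :
    ∀ N : ℕ, ∃ (n : ℕ) (G : SimpleGraph (Fin n)) (x : Fin n),
      N ≤ n ∧ ArboricityAtMostTwo G ∧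
      Real.sqrt ((n : ℝ) / 2) - 1 < ((J n G x).length : ℝ) := by
  intro k
  by_contra hcon
  push Not at hcon
  let m := 2 * k + 1
  let P := Σ j : Fin m, Fin j.val
  have hP : Fintype.card P = k * m := by
    have h1 : Fintype.card P = ∑ i ∈ Finset.range m, i := by
      simp only [P, Fintype.card_sigma, Fintype.card_fin]
      rw [Fin.sum_univ_eq_sum_range (fun i => i)]
    have h2 := Finset.sum_range_id_mul_two m
    rw [← h1] at h2
    have h3 : m - 1 = 2 * k := by simp [m]
    rw [h3] at h2
    nlinarith
  let n := m + k * m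
  have hn : Fintype.card (Fin m ⊕ P) = n := by
    simp [hP, n]
  let e : (Fin m ⊕ P) ≃ Fin n := Fintype.equivFinOfCardEq hn
  let u : Fin m → Fin n := fun a => e (Sum.inl a)
  let w : P → Fin n := fun p => e (Sum.inr p)
  have hu : Function.Injective u := fun a b h => Sum.inl_injective (e.injective h)
  have hw : Function.Injective w := fun a b h => Sum.inr_injective (e.injective h)
  have huw : ∀ a p, u a ≠ w p := fun a p h => by simpa using e.injective h
  let f1 : P → Fin m := fun p => p.1
  let f2 : P → Fin m := fun p => ⟨p.2.val, p.2.2.trans p.1.2⟩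
  let G : (P → Bool) → SimpleGraph (Fin n) :=
    fun S => starGraph u w S f1 ⊔ starGraph u w S f2
  have hG : ∀ S, ArboricityAtMostTwo (G S) := fun S =>
    ⟨_, _, starGraph_acyclic hw huw, starGraph_acyclic hw huw, rfl⟩
  have hadj : ∀ S p x, (G S).Adj (w p) x ↔ S p = true ∧ (x = u (f1 p) ∨ x = u (f2 p)) := by
    intro S p x
    simp only [G, SimpleGraph.sup_adj, starGraph_adj hw huw]
    tauto
  have huu : ∀ S a b, ¬ (G S).Adj (u a) (u b) := by
    intro S a b h
    simp only [G, SimpleGraph.sup_adj, starGraph, SimpleGraph.fromRel_adj] at h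
    rcases h with ⟨_, ⟨q, _, h1, h2⟩ | ⟨q, _, h1, h2⟩⟩ | ⟨_, ⟨q, _, h1, h2⟩ | ⟨q, _, h1, h2⟩⟩ <;>
      exact huw _ _ h2
  have hphi : ∀ S p, Phi0 (G S) (u (f1 p)) (u (f2 p)) ↔ S p = true := by
    intro S p
    constructor
    · rintro ⟨hne, z, -, -, h1, h2⟩
      obtain ⟨y, rfl⟩ := e.surjective z
      rcases y with a | q
      · exact absurd h2 (huu S a _)
      · have h1' := (hadj S q _).1 h1.symm
        have h2' := (hadj S q _).1 h2
        have hq : q = p := by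
          obtain ⟨_, h1'⟩ := h1'
          obtain ⟨_, h2'⟩ := h2'
          simp only [hu.eq_iff] at h1' h2'
          obtain ⟨j, i⟩ := p
          obtain ⟨j', i'⟩ := q
          have hi := i.2
          have hi' := i'.2
          simp only [f1, f2, Fin.ext_iff] at h1' h2'
          have hj : j = j' := Fin.ext (by omega)
          subst hj
          have : i' = i := Fin.ext (by omega)
          rw [this]
        rw [← hq]; exact h1'.1
    · intro hS
      refine ⟨?_, w p, (huw _ _).symm, (huw _ _).symm, ?_, ?_⟩
      · intro h
        have := congrArg Fin.val (hu h)
        have h2 := p.2.2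
        simp only [f1, f2] at this
        omega
      · exact ((hadj S p _).2 ⟨hS, Or.inl rfl⟩).symm
      · exact (hadj S p _).2 ⟨hS, Or.inr rfl⟩
  have hkn : k ≤ n := by simp only [n, m]; nlinarith
  have hlen : ∀ S x, (J n (G S) x).length < k := by
    intro S x
    have h := hcon n (G S) x hkn (hG S)
    have h2 : Real.sqrt ((n : ℝ) / 2) < k + 1 := by
      rw [Real.sqrt_lt' (by positivity)]
      simp only [n, m]
      push_cast
      have : (0 : ℝ) ≤ k := by positivity
      nlinarith
    have : ((J n (G S) x).length : ℝ) < k := by linarith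
    exact_mod_cast this
  obtain ⟨inst, hcard⟩ := card_short k
  let Φ : (P → Bool) → (Fin m → {l : List Bool // l.length < k}) :=
    fun S a => ⟨J n (G S) (u a), hlen S (u a)⟩
  have hΦ : Function.Injective Φ := by
    intro S T h
    have h' : ∀ a, J n (G S) (u a) = J n (G T) (u a) := fun a =>
      congrArg Subtype.val (congrFun h a)
    funext p
    rw [Bool.eq_iff_iff, ← hphi S p, ← hphi T p, ← hD n _ (hG S), ← hD n _ (hG T), h', h']
  classical
  have hle := Fintype.card_le_of_injective Φ hΦ
  rw [Fintype.card_fun, Fintype.card_fun, Fintype.card_bool, hP, Fintype.card_fin, pow_mul] at hle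
  have hlt := Nat.pow_lt_pow_left (Nat.lt_of_succ_le hcard) (show m ≠ 0 by simp [m])
  omega
end

section
/- For every k ≥ 1 and every n ≥ 2 there exists a decoder D : List Bool → List Bool → Bool such that: for every simple graph G on the vertex set Fin n whose edge set is the union of the edge sets of k forests, there exists an injective labeling J : Fin n → List Bool with (length of J x) ≤ (2k+1) · (⌊log₂ n⌋ + 2) for every vertex x, and such that for all vertices x, y: D (J x) (J y) = true if and only if x and y are adjacent in G. -/
theorem acyclic_exists_parent {V : Type*} (F : SimpleGraph V) (hF : F.IsAcyclic) :
    ∃ p : V → V, ∀ x y, F.Adj x y ↔ x ≠ y ∧ (p x = y ∨ p y = x) := by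
  classical
  let r : V → V := fun v => (F.connectedComponentMk v).out
  have hr : ∀ v, F.Reachable v (r v) := fun v =>
    (SimpleGraph.ConnectedComponent.exact (Quot.out_eq (F.connectedComponentMk v))).symm
  have hp : ∀ v, ∃ q : F.Walk v (r v), q.IsPath := fun v => (hr v).exists_isPath
  choose q hq using hp
  have hsnd : ∀ v, (q v).snd ≠ v → F.Adj v (q v).snd := by
    intro v h
    apply SimpleGraph.Walk.adj_snd
    intro hn
    apply h
    have := hn.eq
    rw [SimpleGraph.Walk.snd, SimpleGraph.Walk.getVert_of_length_le _ (by
      rw [SimpleGraph.Walk.nil_iff_length_eq.1 hn]; omega)]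
    exact this.symm
  refine ⟨fun v => (q v).snd, fun x y => ⟨fun h => ⟨h.ne, ?_⟩, ?_⟩⟩
  · by_cases hy : y ∈ (q x).support
    · left
      exact (hF.eq_snd_of_adj_start (hq x) h hy).symm
    · right
      have hxy : r y = r x := by
        have : F.connectedComponentMk y = F.connectedComponentMk x :=
          SimpleGraph.ConnectedComponent.sound h.symm.reachable
        simp only [r, this]
      have key : ∀ (t : V) (a : F.Walk y t) (_ : a.IsPath), t = r x → a.snd = x := by
        rintro t a ha rfl
        have hc : (SimpleGraph.Walk.cons h.symm (q x)).IsPath := (hq x).cons hy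
        have := hF.path_unique ⟨a, ha⟩ ⟨_, hc⟩
        have h2 : a = SimpleGraph.Walk.cons h.symm (q x) := congrArg Subtype.val this
        rw [h2]
        simp
      exact key _ (q y) (hq y) hxy
  · rintro ⟨hne, h | h⟩
    · have := hsnd x (by simp only at h; rw [h]; exact hne.symm)
      simp only at h
      rwa [h] at this
    · have := hsnd y (by simp only at h; rw [h]; exact hne)
      simp only at h
      rw [h] at this
      exact this.symm

/-- The adjacency-query case of Theorem 5.1 (1): graphs on `Fin n` of arboricity
at most `k` admit an adjacency labeling scheme with labels of length
`O(k · log n)`, with a decoder common to all graphs of the class. -/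
theorem arboricity_adjacency_labeling_scheme (k n : ℕ) (hk : 1 ≤ k) (hn : 2 ≤ n) :
    ∃ D : List Bool → List Bool → Bool,
      ∀ G : SimpleGraph (Fin n),
        (∃ F : Fin k → SimpleGraph (Fin n), (∀ i, (F i).IsAcyclic) ∧
          ∀ x y : Fin n, G.Adj x y ↔ ∃ i, (F i).Adj x y) →
        ∃ J : Fin n → List Bool, Function.Injective J ∧
          (∀ x : Fin n, (J x).length ≤ (2 * k + 1) * (Nat.log 2 n + 2)) ∧
          ∀ x y : Fin n, (D (J x) (J y) = true ↔ G.Adj x y) := by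
  classical
  have hcard : Fintype.card (Fin n × (Fin k → Fin n)) ≤
      Fintype.card (Fin ((2 * k + 1) * (Nat.log 2 n + 2)) → Bool) := by
    simp only [Fintype.card_prod, Fintype.card_fin, Fintype.card_fun, Fintype.card_bool]
    have h1 : n ≤ 2 ^ (Nat.log 2 n + 2) :=
      (Nat.lt_pow_succ_log_self (by norm_num) n).le.trans
        (Nat.pow_le_pow_right (by norm_num) (by omega))
    calc n * n ^ k = n ^ (k + 1) := by ring
      _ ≤ n ^ (2 * k + 1) := Nat.pow_le_pow_right (by omega) (by omega)
      _ ≤ (2 ^ (Nat.log 2 n + 2)) ^ (2 * k + 1) := Nat.pow_le_pow_left h1 _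
      _ = _ := by rw [← pow_mul, mul_comm]
  obtain ⟨e⟩ := Function.Embedding.nonempty_of_card_le hcard
  let E : Fin n × (Fin k → Fin n) → List Bool := fun a => List.ofFn (e a)
  have hE : Function.Injective E := fun a b h => e.injective (List.ofFn_injective h)
  haveI : Nonempty (Fin n × (Fin k → Fin n)) :=
    ⟨(⟨0, by omega⟩, fun _ => ⟨0, by omega⟩)⟩
  let I := Function.invFun E
  have hI : ∀ a, I (E a) = a := Function.leftInverse_invFun hE
  refine ⟨fun a b => decide ((I a).1 ≠ (I b).1 ∧
    ∃ i, (I a).2 i = (I b).1 ∨ (I b).2 i = (I a).1), ?_⟩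
  rintro G ⟨F, hF, hG⟩
  choose p hp using fun i => acyclic_exists_parent (F i) (hF i)
  refine ⟨fun v => E (v, fun i => p i v), ?_, ?_, ?_⟩
  · intro a b h
    exact congrArg Prod.fst (hE h)
  · intro x
    exact (List.length_ofFn).le
  · intro x y
    simp only [hI, decide_eq_true_eq, hG, hp, exists_and_left]
end

section
/- Let G be a simple graph, let U and U′ be subsets of its vertex set, let t ∈ ℕ, and suppose x ∈ K^{2t}(U) and y ∈ K^{2t}(U′), where K^{2t}(W) = { v ∈ W : N_G^{2t}(v) ⊆ W } and N_G^{2t}(v) is the set of vertices reachable from v by a walk of length at most 2t in G. Then there is a walk of length at most 2t from x to y in G if and only if there is a walk of length at most 2t from x to y in the induced subgraph G[U ∪ U′]. -/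
/-- The ball of radius `t` around `v`: vertices reachable from `v` by a walk of
length at most `t`. -/
def Ball {V : Type*} (G : SimpleGraph V) (t : ℕ) (v : V) : Set V :=
  {u | ∃ w : G.Walk v u, w.length ≤ t}

/-- Claim 5.2 in the proof of Theorem 5.1 (5): if `x` is in the `2t`-kernel of
`U` and `y` in the `2t`-kernel of `U'`, then `d_G(x,y) ≤ 2t` iff
`d_{G[U ∪ U']}(x,y) ≤ 2t`. -/
theorem walk_le_iff_walk_le_in_union {V : Type*} (G : SimpleGraph V)
    (U U' : Set V) (t : ℕ) (x y : V)
    (hxU : x ∈ U) (hxK : Ball G (2 * t) x ⊆ U)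
    (hyU' : y ∈ U') (hyK : Ball G (2 * t) y ⊆ U') :
    (∃ w : G.Walk x y, w.length ≤ 2 * t) ↔
      ∃ w : (G.induce (U ∪ U')).Walk
        ⟨x, Set.mem_union_left _ hxU⟩ ⟨y, Set.mem_union_right _ hyU'⟩,
        w.length ≤ 2 * t := by
  classical
  constructor
  · rintro ⟨w, hw⟩
    have hs : ∀ z ∈ w.support, z ∈ U ∪ U' := fun z hz =>
      Or.inl (hxK ⟨w.takeUntil z hz, (w.length_takeUntil_le hz).trans hw⟩)
    refine ⟨w.induce _ hs, ?_⟩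
    have h := congrArg SimpleGraph.Walk.length (w.map_induce hs)
    rw [SimpleGraph.Walk.length_map] at h
    exact h.le.trans hw
  · rintro ⟨w, hw⟩
    exact ⟨w.map (SimpleGraph.Embedding.induce _).toHom,
      (SimpleGraph.Walk.length_map _ _).le.trans hw⟩
end
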